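/- arXiv:1907.05335 — 2 statements merged into one kernel-verified Lean document; each statement's English description precedes it below -/
import Mathlib

section
/- Suppose i ≥ j and let d = gcd(i,j). Then in R(A;i,j) one has x^{(i²−j²)/d} = (−1)^{(i+j)/d}·1. -/
/-- The defining relations for `R(A;i,j)`: `x^i*y + y*x^j = 1` and `y^2 = 0`,
where `x` and `y` are the two generators of the free algebra. -/
inductive MatRel (A : Type*) [CommRing A] (i j : ℕ) :
    FreeAlgebra A (Fin 2) → FreeAlgebra A (Fin 2) → Prop
  | rel1 : MatRel A i j
      (FreeAlgebra.ι A (0 : Fin 2) ^ i * FreeAlgebra.ι A (1 : Fin 2) +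
        FreeAlgebra.ι A (1 : Fin 2) * FreeAlgebra.ι A (0 : Fin 2) ^ j) 1
  | rel2 : MatRel A i j (FreeAlgebra.ι A (1 : Fin 2) ^ 2) 0

/-- `R(A;i,j)`, the quotient of the free `A`-algebra on `x, y` by the two-sided ideal
generated by `x^i*y + y*x^j - 1` and `y^2`. -/
abbrev MatRing (A : Type*) [CommRing A] (i j : ℕ) : Type _ := RingQuot (MatRel A i j)

/-- The image of the generator `x` in `R(A;i,j)`. -/
noncomputable def Xgen (A : Type*) [CommRing A] (i j : ℕ) : MatRing A i j :=
  RingQuot.mkAlgHom A (MatRel A i j) (FreeAlgebra.ι A (0 : Fin 2))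

/-- The image of the generator `y` in `R(A;i,j)`. -/
noncomputable def Ygen (A : Type*) [CommRing A] (i j : ℕ) : MatRing A i j :=
  RingQuot.mkAlgHom A (MatRel A i j) (FreeAlgebra.ι A (1 : Fin 2))

/-!
Put `p = x ^ i` and `q = x ^ j`. The relations force `p - q` and `p * q` to commute with `y`, hence
also `q * y + y * p = 1`. It follows that `w = 1 - (p + q) * y` is an involution conjugating `p` to
`-q` and `q` to `-p`. If `i * m = j * n`, then `p ^ m = q ^ n`, and conjugating by `w` gives
`(-q) ^ m = (-p) ^ n`: for `z = x ^ ((i + j) * (n - m)) - (-1) ^ (m + n)` this says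
`z * q ^ m = 0`. To cancel `q ^ m`, note that `z` commutes with `y`, since `x ^ (i + j) = p * q`
does, and that `p - q` is `q` times a factor which becomes invertible once `x` is nilpotent; so
powers of `p - q`, which move past `y`, can be peeled off one at a time with `p * y + y * q = 1`.
-/

/-- The relations `p * y + y * q = 1` and `y ^ 2 = 0`, which make a ring a ring of `2 × 2` matrices
with `y` as an off-diagonal matrix unit. In `R(A;i,j)` they hold for `p = x ^ i` and
`q = x ^ j`. -/
structure IsMatrixTriple {R : Type*} [Ring R] (p q y : R) : Prop where
  add_eq_one : p * y + y * q = 1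
  sq_eq_zero : y ^ 2 = 0

namespace IsMatrixTriple

variable {R : Type*} [Ring R]

section CommutingPair

variable {p q y : R}

theorem mul_self_eq_zero (h : IsMatrixTriple p q y) : y * y = 0 := by
  rw [← sq, h.sq_eq_zero]

theorem mul_left_mul (h : IsMatrixTriple p q y) : y * p * y = y := by
  calc y * p * y = y * (p * y + y * q) - y * y * q := by noncomm_ring
    _ = y := by rw [h.add_eq_one, h.mul_self_eq_zero, mul_one, zero_mul, sub_zero]

theorem mul_right_mul (h : IsMatrixTriple p q y) : y * q * y = y := by
  calc y * q * y = (p * y + y * q) * y - p * (y * y) := by noncomm_ring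
    _ = y := by rw [h.add_eq_one, h.mul_self_eq_zero, one_mul, mul_zero, sub_zero]

theorem mul_mul_mul_eq_zero (h : IsMatrixTriple p q y) (hpq : Commute p q) :
    y * (p * q) * y = 0 := by
  calc y * (p * q) * y = y * q * (p * y + y * q) - y * q * y * q := by
        rw [hpq.eq]; noncomm_ring
    _ = 0 := by rw [h.add_eq_one, h.mul_right_mul, mul_one, sub_self]

theorem mul_sq_mul_add_mul_sq_mul (h : IsMatrixTriple p q y) (hpq : Commute p q) :
    y * p ^ 2 * y + y * q ^ 2 * y = 0 := by
  calc y * p ^ 2 * y + y * q ^ 2 * y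
      = y * p ^ 2 * (y * q * y) + (y * p * y) * q ^ 2 * y := by
        rw [h.mul_right_mul, h.mul_left_mul]
    _ = y * p * (p * y + y * q) * q * y := by noncomm_ring
    _ = y * (p * q) * y := by rw [h.add_eq_one]; noncomm_ring
    _ = 0 := h.mul_mul_mul_eq_zero hpq

theorem sq_mul_sub_mul_sq (h : IsMatrixTriple p q y) : p ^ 2 * y - y * q ^ 2 = p - q := by
  calc p ^ 2 * y - y * q ^ 2 = p * (p * y + y * q) - (p * y + y * q) * q := by noncomm_ring
    _ = p - q := by rw [h.add_eq_one, mul_one, one_mul]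

theorem commute_sub (h : IsMatrixTriple p q y) (hpq : Commute p q) : Commute (p - q) y := by
  have hleft : (p - q) * y = -(y * q ^ 2 * y) := by
    rw [← h.sq_mul_sub_mul_sq, sub_mul, mul_assoc (p ^ 2), h.mul_self_eq_zero, mul_zero, zero_sub]
  have hright : y * (p - q) = y * p ^ 2 * y := by
    rw [← h.sq_mul_sub_mul_sq, mul_sub, ← mul_assoc, ← mul_assoc, h.mul_self_eq_zero, zero_mul,
      sub_zero]
  rw [commute_iff_eq, hleft, hright]
  exact (eq_neg_of_add_eq_zero_left (h.mul_sq_mul_add_mul_sq_mul hpq)).symm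

theorem swap (h : IsMatrixTriple p q y) (hpq : Commute p q) : IsMatrixTriple q p y where
  add_eq_one := by
    calc q * y + y * p = p * y + y * q - ((p - q) * y - y * (p - q)) := by noncomm_ring
      _ = 1 := by rw [h.add_eq_one, (h.commute_sub hpq).eq, sub_self, sub_zero]
  sq_eq_zero := h.sq_eq_zero

theorem commute_mul (h : IsMatrixTriple p q y) (hpq : Commute p q) : Commute (p * q) y := by
  calc p * q * y = p * (1 - y * p) := by
        rw [mul_assoc, eq_sub_of_add_eq (h.swap hpq).add_eq_one]
    _ = (1 - p * y) * p := by noncomm_ring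
    _ = y * (p * q) := by rw [← eq_sub_of_add_eq' h.add_eq_one, mul_assoc, hpq.eq]

theorem semiconjBy_left (h : IsMatrixTriple p q y) (hpq : Commute p q) :
    SemiconjBy (1 - (p + q) * y) p (-q) := by
  calc (1 - (p + q) * y) * p = p - (p + q) * (y * p) := by noncomm_ring
    _ = p - (p + q) * (1 - q * y) := by rw [eq_sub_of_add_eq' (h.swap hpq).add_eq_one]
    _ = -q + (p * q + q * q) * y := by noncomm_ring
    _ = -q * (1 - (p + q) * y) := by rw [hpq.eq]; noncomm_ring

theorem semiconjBy_right (h : IsMatrixTriple p q y) (hpq : Commute p q) :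
    SemiconjBy (1 - (p + q) * y) q (-p) := by
  rw [add_comm p q]
  exact (h.swap hpq).semiconjBy_left hpq.symm

theorem one_sub_add_mul_mul_self (h : IsMatrixTriple p q y) (hpq : Commute p q) :
    (1 - (p + q) * y) * (1 - (p + q) * y) = 1 := by
  set w := 1 - (p + q) * y with hw
  have hwy : w * y = y := by
    rw [hw, sub_mul, mul_assoc, h.mul_self_eq_zero, mul_zero, one_mul, sub_zero]
  have hws : w * (p + q) = -((p + q) * w) := by
    rw [mul_add, (h.semiconjBy_left hpq).eq, (h.semiconjBy_right hpq).eq, ← add_mul, ← neg_add,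
      add_comm q p, neg_mul]
  calc w * w = w - w * (p + q) * y := by nth_rw 2 [hw]; noncomm_ring
    _ = w + (p + q) * (w * y) := by rw [hws]; noncomm_ring
    _ = 1 := by rw [hwy, hw, sub_add_cancel]

theorem neg_pow_eq_neg_pow (h : IsMatrixTriple p q y) (hpq : Commute p q) {m n : ℕ}
    (hmn : p ^ m = q ^ n) : (-q) ^ m = (-p) ^ n := by
  have hinv := h.one_sub_add_mul_mul_self hpq
  have hw : IsUnit (1 - (p + q) * y) := ⟨⟨_, _, hinv, hinv⟩, rfl⟩
  refine hw.mul_right_cancel ?_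
  rw [← (h.semiconjBy_left hpq).pow_right m, ← (h.semiconjBy_right hpq).pow_right n, hmn]

end CommutingPair

section Powers

variable {x y z : R} {i j k : ℕ}

theorem eq_zero_of_mul_sub_eq_zero (h : IsMatrixTriple (x ^ i) (x ^ j) y) (hij : j < i)
    (hzy : Commute z y) (hsub : z * (x ^ i - x ^ j) = 0) (hk : z * x ^ k = 0) : z = 0 := by
  have hzi : z * x ^ i = z * x ^ j := by rwa [mul_sub, sub_eq_zero] at hsub
  have hshift (l : ℕ) : z * x ^ j = z * x ^ (j + (i - j) * l) := by
    induction l with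
    | zero => rw [mul_zero, add_zero]
    | succ l ih =>
      calc z * x ^ j = z * x ^ i := hzi.symm
        _ = z * x ^ j * x ^ (i - j) := by rw [mul_assoc, ← pow_add, Nat.add_sub_of_le hij.le]
        _ = z * x ^ (j + (i - j) * (l + 1)) := by
          rw [ih, mul_assoc, ← pow_add, mul_add_one, add_assoc]
  have hzj : z * x ^ j = 0 := by
    have hle : k ≤ j + (i - j) * k :=
      le_add_left (Nat.le_mul_of_pos_left k (Nat.sub_pos_of_lt hij))
    rw [hshift k, ← Nat.add_sub_of_le hle, pow_add, ← mul_assoc, hk, zero_mul]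
  calc z = z * x ^ i * y + z * y * x ^ j := by
        rw [mul_assoc, mul_assoc, ← mul_add, h.add_eq_one, mul_one]
    _ = z * x ^ j * y + y * (z * x ^ j) := by rw [hzi, hzy.eq, mul_assoc y]
    _ = 0 := by rw [hzj, zero_mul, mul_zero, add_zero]

theorem eq_zero_of_mul_pow_eq_zero (h : IsMatrixTriple (x ^ i) (x ^ j) y) (hij : j < i)
    (hzy : Commute z y) (hz : z * (x ^ j) ^ k = 0) : z = 0 := by
  have hay : Commute (x ^ i - x ^ j) y := h.commute_sub (.pow_pow_self x i j)
  have hax (l : ℕ) : Commute (x ^ i - x ^ j) (x ^ l) :=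
    (Commute.pow_pow_self x i l).sub_left (.pow_pow_self x j l)
  have hpeel (l : ℕ) (hl : z * (x ^ i - x ^ j) ^ l = 0) : z = 0 := by
    induction l with
    | zero => rwa [pow_zero, mul_one] at hl
    | succ l ih =>
      have hzay : Commute (z * (x ^ i - x ^ j) ^ l) y := hzy.mul_left (hay.pow_left l)
      refine ih (h.eq_zero_of_mul_sub_eq_zero (k := j * k) hij hzay ?_ ?_)
      · rwa [mul_assoc, ← pow_succ]
      · rw [mul_assoc, ((hax _).pow_left l).eq, ← mul_assoc, pow_mul, hz, zero_mul]
  refine hpeel k ?_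
  have hfactor : x ^ i - x ^ j = x ^ j * (x ^ (i - j) - 1) := by
    rw [mul_sub, mul_one, ← pow_add, Nat.add_sub_of_le hij.le]
  have hcomm : Commute (x ^ j) (x ^ (i - j) - 1) :=
    (Commute.pow_pow_self x j (i - j)).sub_right (.one_right _)
  rw [hfactor, hcomm.mul_pow, ← mul_assoc, hz, zero_mul]

theorem pow_eq_neg_one_pow (h : IsMatrixTriple (x ^ i) (x ^ j) y) (hij : j < i) {m n : ℕ}
    (hmn : i * m = j * n) : x ^ ((i + j) * (n - m)) = (-1) ^ (m + n) := by
  have hpq : Commute (x ^ i) (x ^ j) := .pow_pow_self x i j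
  have hle : m ≤ n := by
    by_contra! hlt
    exact (Nat.mul_lt_mul'' hij hlt).ne hmn.symm
  have hexp : (i + j) * (n - m) + j * m = i * n := by
    zify [hle] at hmn ⊢
    linear_combination -hmn
  have hneg : (-1) ^ m * x ^ (j * m) = (-1) ^ n * x ^ (i * n) := by
    rw [pow_mul, pow_mul, ← neg_pow, ← neg_pow]
    exact h.neg_pow_eq_neg_pow hpq (by rw [← pow_mul, ← pow_mul, hmn])
  have hxy : Commute (x ^ ((i + j) * (n - m))) y := by
    rw [pow_mul, pow_add]
    exact (h.commute_mul hpq).pow_left _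
  rw [← sub_eq_zero]
  refine h.eq_zero_of_mul_pow_eq_zero (k := m) hij
    (hxy.sub_left ((Commute.neg_one_left y).pow_left _)) ?_
  rw [sub_mul, ← pow_mul, ← pow_add, hexp, add_comm m n, pow_add, mul_assoc, hneg, ← mul_assoc,
    ← pow_add, (Even.add_self n).neg_one_pow, one_mul, sub_self]

end Powers

end IsMatrixTriple

theorem isMatrixTriple_Xgen_Ygen (A : Type*) [CommRing A] (i j : ℕ) :
    IsMatrixTriple (Xgen A i j ^ i) (Xgen A i j ^ j) (Ygen A i j) where
  add_eq_one := by simpa [Xgen, Ygen] using RingQuot.mkAlgHom_rel A (MatRel.rel1 (i := i) (j := j))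
  sq_eq_zero := by simpa [Ygen] using RingQuot.mkAlgHom_rel A (MatRel.rel2 (i := i) (j := j))

theorem stmt6_general {R : Type*} [Ring R] {x y : R} {i j : ℕ}
    (h : IsMatrixTriple (x ^ i) (x ^ j) y) (hi : 0 < i) (hij : j ≤ i) :
    x ^ ((i ^ 2 - j ^ 2) / Nat.gcd i j) = (-1) ^ ((i + j) / Nat.gcd i j) := by
  rcases hij.eq_or_lt with rfl | hlt
  · rw [Nat.sub_self, Nat.zero_div, pow_zero, Nat.gcd_self, ← two_mul, Nat.mul_div_cancel _ hi,
      neg_one_sq]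
  · have hpos : 0 < Nat.gcd i j := Nat.gcd_pos_of_pos_left j hi
    obtain ⟨n, m, -, hn, hm⟩ := Nat.exists_coprime i j
    have hexp : (i ^ 2 - j ^ 2) / Nat.gcd i j = (i + j) * (n - m) := by
      refine Nat.div_eq_of_eq_mul_left hpos ?_
      rw [Nat.sq_sub_sq, mul_assoc, Nat.sub_mul, ← hn, ← hm]
    have hsum : (i + j) / Nat.gcd i j = m + n :=
      Nat.div_eq_of_eq_mul_left hpos (by rw [add_mul, ← hn, ← hm, add_comm])
    have hmn : i * m = j * n := by
      calc i * m = n * m * Nat.gcd i j := by rw [mul_right_comm, ← hn]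
        _ = j * n := by rw [mul_assoc, ← hm, mul_comm]
    rw [hexp, hsum, h.pow_eq_neg_one_pow hlt hmn]

theorem stmt6 (A : Type*) [CommRing A] (i j : ℕ) (hi : 1 ≤ i) (hj : 1 ≤ j)
    (hij : i ≥ j) (d : ℕ) (hd : d = Nat.gcd i j) :
    Xgen A i j ^ ((i ^ 2 - j ^ 2) / d)
      = (-1 : MatRing A i j) ^ ((i + j) / d) * 1 := by
  rw [mul_one, hd]
  exact stmt6_general (isMatrixTriple_Xgen_Ygen A i j) hi hij
end

section
/- Let d = gcd(i,j). Then there exist polynomials p(X), q(X) in one variable over A such that in R(A;i,j) one has y·x^d = p(x) + q(x)·y. -/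
/-!
For a subalgebra `B` containing `x`, the elements `b` of `B` with `y * b ∈ B + B * y` form a
subalgebra, and the relation `x ^ i * y + y * x ^ j = 1` together with its mirror image
`x ^ j * y + y * x ^ i = 1` puts `x ^ i` and `x ^ j` in it. For `i ≠ j` the element `x` has finite
order, so `x ^ gcd i j` is a product of powers of `x ^ i` and `x ^ j`. The order is finite because
`c = (x ^ i + x ^ j) * y - 1` satisfies `c * x ^ i = -x ^ j * c` and `c * x ^ j = -x ^ i * c`:
moving `c` past `(x ^ i) ^ j = (x ^ j) ^ i` in these two ways gives
`(-x ^ j) ^ j * c = (-x ^ i) ^ i * c`, from which `c` can be removed. Squaring disposes of the signs,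
and `x` is left regular, so a power of `x` can be cancelled.
-/

section FiniteOrder

theorem zpow_mem_of_isOfFinOrder {G : Type*} [Group G] {S : Submonoid G} {g : G}
    (hg : IsOfFinOrder g) (hgS : g ∈ S) (n : ℤ) : g ^ n ∈ S :=
  Submonoid.powers_le.2 hgS (hg.mem_powers_iff_mem_zpowers.2 ⟨n, rfl⟩)

theorem pow_gcd_mem_of_isOfFinOrder {M : Type*} [Monoid M] {S : Submonoid M} {x : M} {m n : ℕ}
    (hx : IsOfFinOrder x) (hm : x ^ m ∈ S) (hn : x ^ n ∈ S) : x ^ m.gcd n ∈ S := by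
  obtain ⟨u, rfl⟩ := hx.isUnit
  have hu : IsOfFinOrder u := Units.isOfFinOrder_val.1 hx
  have hbezout : u ^ m.gcd n = (u ^ m) ^ m.gcdA n * (u ^ n) ^ m.gcdB n := by
    rw [← zpow_natCast, Nat.gcd_eq_gcd_ab, zpow_add, zpow_mul, zpow_mul, zpow_natCast,
      zpow_natCast]
  have hmem : u ^ m.gcd n ∈ S.comap (Units.coeHom M) :=
    hbezout ▸ mul_mem (zpow_mem_of_isOfFinOrder hu.pow (by simpa using hm) _)
      (zpow_mem_of_isOfFinOrder hu.pow (by simpa using hn) _)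
  simpa using hmem

theorem isOfFinOrder_of_isLeftRegular_of_pow_eq_pow {M : Type*} [Monoid M] {x : M} {m n : ℕ}
    (hx : IsLeftRegular x) (hmn : m < n) (h : x ^ m = x ^ n) : IsOfFinOrder x := by
  refine isOfFinOrder_iff_pow_eq_one.2 ⟨n - m, Nat.sub_pos_of_lt hmn, hx.pow m ?_⟩
  change x ^ m * x ^ (n - m) = x ^ m * 1
  rw [pow_mul_pow_sub x hmn.le, mul_one, h]

end FiniteOrder

section Relation

variable {R : Type*} [Ring R] {a b x y : R}

theorem mul_mul_self_of_mul_add_mul_eq_one_left (h : a * y + y * b = 1) (hy : y * y = 0) :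
    y * a * y = y := by
  simpa [mul_add, ← mul_assoc, hy] using congrArg (y * ·) h

theorem mul_mul_self_of_mul_add_mul_eq_one_right (h : a * y + y * b = 1) (hy : y * y = 0) :
    y * b * y = y := by
  simpa [add_mul, mul_assoc, hy] using congrArg (· * y) h

theorem mul_mul_mul_self_eq_zero (hab : Commute a b) (h : a * y + y * b = 1) (hy : y * y = 0) :
    y * a * b * y = 0 := by
  calc y * a * b * y = y * b * a * y := by rw [mul_assoc y, hab.eq, ← mul_assoc]
    _ = a * y - a * (y * a * y) := by rw [eq_sub_of_add_eq' h]; noncomm_ring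
    _ = 0 := by rw [mul_mul_self_of_mul_add_mul_eq_one_left h hy, sub_self]

theorem mul_add_mul_eq_one_swap (hab : Commute a b) (h : a * y + y * b = 1) (hy : y * y = 0) :
    b * y + y * a = 1 := by
  have hyay : y * a * y = y := mul_mul_self_of_mul_add_mul_eq_one_left h hy
  have hyby : y * b * y = y := mul_mul_self_of_mul_add_mul_eq_one_right h hy
  -- `b * y` and `y * a` are orthogonal idempotents, so the defect `w` is idempotent;
  -- as `y` annihilates `w` on both sides, also `w * w = (w * a * y) * (y * b * w) = 0`.
  let w := 1 - b * y - y * a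
  have hyw : y * w = 0 := by
    calc y * w = y - y * b * y - y * y * a := by noncomm_ring [w]
      _ = 0 := by rw [hyby, hy, zero_mul, sub_self, sub_zero]
  have hwy : w * y = 0 := by
    calc w * y = y - b * (y * y) - y * a * y := by noncomm_ring [w]
      _ = 0 := by rw [hyay, hy, mul_zero, sub_zero, sub_self]
  have hwby : w * b * y = 0 := by
    calc w * b * y = b * y - b * (y * b * y) - y * a * b * y := by noncomm_ring [w]
      _ = 0 := by rw [hyby, mul_mul_mul_self_eq_zero hab h hy, sub_self, sub_zero]
  have hw_idem : w * w = w := by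
    calc w * w = w * (1 - b * y - y * a) := rfl
      _ = w - w * b * y - w * y * a := by noncomm_ring
      _ = w := by rw [hwby, hwy, zero_mul, sub_zero, sub_zero]
  have hw_left : w * a * y = w := by
    calc w * a * y = w * (a * y + y * b) - w * y * b := by noncomm_ring
      _ = w := by rw [h, hwy, zero_mul, sub_zero, mul_one]
  have hw_right : y * b * w = w := by
    calc y * b * w = (a * y + y * b) * w - a * (y * w) := by noncomm_ring
      _ = w := by rw [h, hyw, mul_zero, sub_zero, one_mul]
  have hw : w = 0 := by
    calc w = (w * a * y) * (y * b * w) := by rw [hw_left, hw_right, hw_idem]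
      _ = w * a * (y * y) * b * w := by noncomm_ring
      _ = 0 := by rw [hy, mul_zero, zero_mul, zero_mul]
  rw [eq_comm, ← sub_eq_zero, ← sub_sub]
  exact hw

theorem semiconjBy_add_mul_sub_one (hab : Commute a b) (h : b * y + y * a = 1) :
    SemiconjBy ((a + b) * y - 1) a (-b) := by
  calc ((a + b) * y - 1) * a = (a + b) * (y * a) - a := by noncomm_ring
    _ = b - (a * b + b * b) * y := by rw [eq_sub_of_add_eq' h]; noncomm_ring
    _ = -b * ((a + b) * y - 1) := by rw [hab.eq]; noncomm_ring

theorem neg_pow_eq_neg_pow_of_pow_eq_pow (hab : Commute a b) (h : a * y + y * b = 1)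
    (hy : y * y = 0) {m n : ℕ} (hmn : a ^ m = b ^ n) : (-b) ^ m = (-a) ^ n := by
  set c := (a + b) * y - 1 with hc
  have hca : SemiconjBy c a (-b) :=
    semiconjBy_add_mul_sub_one hab (mul_add_mul_eq_one_swap hab h hy)
  have hcb : SemiconjBy c b (-a) := by
    simpa only [hc, add_comm] using semiconjBy_add_mul_sub_one hab.symm h
  let g := (-b) ^ m - (-a) ^ n
  have hgc : g * c = 0 := by
    rw [sub_mul, ← (hca.pow_right m).eq, ← (hcb.pow_right n).eq, hmn, sub_self]
  have hg : g * (a + b) * y = g := by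
    rwa [hc, mul_sub, mul_one, sub_eq_zero, ← mul_assoc] at hgc
  have hgy : g * y = 0 := by
    rw [← hg, mul_assoc _ y, hy, mul_zero]
  have hg_comm : Commute g (a + b) := by
    have hb : Commute (-b) (a + b) := (hab.symm.add_right (Commute.refl b)).neg_left
    have ha : Commute (-a) (a + b) := ((Commute.refl a).add_right hab).neg_left
    exact (hb.pow_left m).sub_left (ha.pow_left n)
  refine sub_eq_zero.1 (?_ : g = 0)
  rw [← hg, hg_comm.eq, mul_assoc, hgy, mul_zero]

variable {i j : ℕ}

theorem isLeftRegular_of_pow_mul_add_mul_pow (hi : 1 ≤ i) (hij : i < j)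
    (h : x ^ i * y + y * x ^ j = 1) (h' : x ^ j * y + y * x ^ i = 1) : IsLeftRegular x := by
  refine isLeftRegular_of_non_zero_divisor x fun t ht => ?_
  have pow_mul_eq_zero {n : ℕ} (hn : 1 ≤ n) : x ^ n * t = 0 := by
    rw [← pow_sub_mul_pow x hn, pow_one, mul_assoc, ht, mul_zero]
  have hi_fix : x ^ i * (y * t) = t := by
    simpa [add_mul, mul_assoc, pow_mul_eq_zero (hi.trans hij.le)] using congrArg (· * t) h
  have hj_fix : x ^ j * (y * t) = t := by
    simpa [add_mul, mul_assoc, pow_mul_eq_zero hi] using congrArg (· * t) h'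
  rw [← hj_fix, ← pow_sub_mul_pow x hij.le, mul_assoc, hi_fix,
    pow_mul_eq_zero (Nat.sub_pos_of_lt hij)]

theorem isOfFinOrder_of_pow_mul_add_mul_pow (hi : 1 ≤ i) (hij : i < j)
    (h : x ^ i * y + y * x ^ j = 1) (hy : y * y = 0) : IsOfFinOrder x := by
  have hcomm : Commute (x ^ i) (x ^ j) := Commute.pow_pow_self x i j
  have hx : IsLeftRegular x :=
    isLeftRegular_of_pow_mul_add_mul_pow hi hij h (mul_add_mul_eq_one_swap hcomm h hy)
  have hneg : (-x ^ j) ^ j = (-x ^ i) ^ i :=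
    neg_pow_eq_neg_pow_of_pow_eq_pow hcomm h hy (pow_right_comm x i j)
  have neg_pow_sq (k : ℕ) : ((-x ^ k) ^ k) ^ 2 = x ^ (k * k * 2) := by
    rw [pow_right_comm, neg_sq, pow_right_comm, pow_mul, pow_mul]
  have hpow : x ^ (i * i * 2) = x ^ (j * j * 2) := by
    rw [← neg_pow_sq, ← neg_pow_sq, hneg]
  refine isOfFinOrder_of_isLeftRegular_of_pow_eq_pow hx ?_ hpow
  gcongr

end Relation

section Reordering

/-- The subalgebra of those `b ∈ B` for which `y * b` can be rewritten with `y` on the right, that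
is, `y * b ∈ B + B * y`. -/
def reorderSubalgebra {A R : Type*} [CommSemiring A] [Semiring R] [Algebra A R]
    (B : Subalgebra A R) (y : R) : Subalgebra A R where
  carrier := {b | b ∈ B ∧ ∃ p ∈ B, ∃ q ∈ B, y * b = p + q * y}
  mul_mem' := by
    rintro b b' ⟨hb, p, hp, q, hq, h⟩ ⟨hb', p', hp', q', hq', h'⟩
    refine ⟨mul_mem hb hb', p * b' + q * p', add_mem (mul_mem hp hb') (mul_mem hq hp'),
      q * q', mul_mem hq hq', ?_⟩
    rw [← mul_assoc, h, add_mul, mul_assoc q y, h', mul_add, add_assoc, mul_assoc]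
  add_mem' := by
    rintro b b' ⟨hb, p, hp, q, hq, h⟩ ⟨hb', p', hp', q', hq', h'⟩
    refine ⟨add_mem hb hb', p + p', add_mem hp hp', q + q', add_mem hq hq', ?_⟩
    rw [mul_add, h, h', add_mul, add_add_add_comm]
  algebraMap_mem' r :=
    ⟨B.algebraMap_mem r, 0, B.zero_mem, algebraMap A R r, B.algebraMap_mem r, by
      rw [zero_add, Algebra.commutes]⟩

variable {A R : Type*} [CommRing A] [Ring R] [Algebra A R] {B : Subalgebra A R} {a b x y : R}

theorem mem_reorderSubalgebra_of_mul_add_mul_eq_one (ha : a ∈ B) (hb : b ∈ B)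
    (h : a * y + y * b = 1) : b ∈ reorderSubalgebra B y :=
  ⟨hb, 1, B.one_mem, -a, neg_mem ha, by rw [eq_sub_of_add_eq' h, neg_mul, sub_eq_add_neg]⟩

theorem pow_gcd_mem_reorderSubalgebra {i j : ℕ} (hx : x ∈ B) (hi : 1 ≤ i) (hj : 1 ≤ j)
    (h : x ^ i * y + y * x ^ j = 1) (hy : y * y = 0) :
    x ^ i.gcd j ∈ reorderSubalgebra B y := by
  have h' := mul_add_mul_eq_one_swap (Commute.pow_pow_self x i j) h hy
  have hxi : x ^ i ∈ reorderSubalgebra B y :=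
    mem_reorderSubalgebra_of_mul_add_mul_eq_one (pow_mem hx j) (pow_mem hx i) h'
  have hxj : x ^ j ∈ reorderSubalgebra B y :=
    mem_reorderSubalgebra_of_mul_add_mul_eq_one (pow_mem hx i) (pow_mem hx j) h
  have of_isOfFinOrder (hfin : IsOfFinOrder x) : x ^ i.gcd j ∈ reorderSubalgebra B y :=
    pow_gcd_mem_of_isOfFinOrder (S := (reorderSubalgebra B y).toSubmonoid) hfin hxi hxj
  rcases lt_trichotomy i j with hij | rfl | hji
  · exact of_isOfFinOrder (isOfFinOrder_of_pow_mul_add_mul_pow hi hij h hy)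
  · rwa [Nat.gcd_self]
  · exact of_isOfFinOrder (isOfFinOrder_of_pow_mul_add_mul_pow hj hji h' hy)

end Reordering

section MatRing

variable (A : Type*) [CommRing A] (i j : ℕ)

theorem Xgen_pow_mul_Ygen_add_Ygen_mul_Xgen_pow :
    Xgen A i j ^ i * Ygen A i j + Ygen A i j * Xgen A i j ^ j = 1 := by
  simpa [Xgen, Ygen] using RingQuot.mkAlgHom_rel A (MatRel.rel1 (A := A) (i := i) (j := j))

theorem Ygen_mul_self : Ygen A i j * Ygen A i j = 0 := by
  simpa [Ygen, sq] using RingQuot.mkAlgHom_rel A (MatRel.rel2 (A := A) (i := i) (j := j))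

end MatRing

theorem stmt8 (A : Type*) [CommRing A] (i j : ℕ) (hi : 1 ≤ i) (hj : 1 ≤ j) :
    ∃ p q : Polynomial A,
      Ygen A i j * Xgen A i j ^ (Nat.gcd i j)
        = Polynomial.aeval (Xgen A i j) p +
          Polynomial.aeval (Xgen A i j) q * Ygen A i j := by
  have hx : Xgen A i j ∈ (Polynomial.aeval (R := A) (Xgen A i j)).range :=
    ⟨Polynomial.X, Polynomial.aeval_X _⟩
  obtain ⟨-, _, ⟨p, rfl⟩, _, ⟨q, rfl⟩, h⟩ := pow_gcd_mem_reorderSubalgebra hx hi hj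
    (Xgen_pow_mul_Ygen_add_Ygen_mul_Xgen_pow A i j) (Ygen_mul_self A i j)
  exact ⟨p, q, h⟩
end
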